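/- In a nonlinear model (p_k ≠ k/m for some 0 ≤ k ≤ m) with X_0 > 0 and Y_0 > 0, the zero set Z_P is a finite set, the process {a_n} converges almost surely, and its limit lies in Z_P almost surely. -/

import Mathlib

open MeasureTheory ProbabilityTheory Filter Set

noncomputable section

/-- The polynomial `P(z) = (1/2) ∑_{k=0}^m C(m,k) z^k (1-z)^{m-k} (p_k - k/m)`. -/
def polyP (m : ℕ) (p : ℕ → ℝ) (z : ℝ) : ℝ :=
  (1 / 2) * ∑ k ∈ Finset.range (m + 1),
    (m.choose k : ℝ) * z ^ k * (1 - z) ^ (m - k) * (p k - (k : ℝ) / m)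

/-- The zero set `Z_P = {z ∈ [0,1] : P(z) = 0}`. -/
def zeroSetP (m : ℕ) (p : ℕ → ℝ) : Set ℝ :=
  {z ∈ Set.Icc (0 : ℝ) 1 | polyP m p z = 0}

/-- The two-type preferential attachment process with `m` edges per new node and type
adoption parameters `p 0, …, p m`, defined on a probability space `(Ω, μ)` with filtration
`F`.  `A n` is the number of red nodes and `X n` the sum of the degrees of red nodes at time
`n`; the transition probabilities given `F n` are those of the model: a number `k` of red
neighbours is drawn from the `Binomial(m, x_n)` distribution, and then the new node is red
with probability `p k` (adding `1` to the red nodes and `k + m` to the red degrees) and blue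
with probability `1 - p k` (adding `k` to the red degrees). -/
structure PAProcess (Ω : Type) [MeasurableSpace Ω] where
  μ : Measure Ω
  isProb : IsProbabilityMeasure μ
  m : ℕ
  hm : 1 ≤ m
  p : ℕ → ℝ
  hp : ∀ k ≤ m, p k ∈ Set.Icc (0 : ℝ) 1
  A : ℕ → Ω → ℕ
  X : ℕ → Ω → ℕ
  F : Filtration ℕ ‹MeasurableSpace Ω›
  A0 : ℕ
  B0 : ℕ
  X0 : ℕ
  Y0 : ℕ
  hA0 : ∀ ω, A 0 ω = A0
  hX0 : ∀ ω, X 0 ω = X0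
  adaptedA : ∀ n, Measurable[F n] (A n)
  adaptedX : ∀ n, Measurable[F n] (X n)
  hXle : ∀ n ω, X n ω ≤ X0 + Y0 + 2 * m * n
  step_red : ∀ n, ∀ k ≤ m,
    μ[Set.indicator {ω | A (n + 1) ω = A n ω + 1 ∧ X (n + 1) ω = X n ω + k + m}
        (fun _ => (1 : ℝ)) | F n]
      =ᵐ[μ] fun ω => (m.choose k : ℝ) *
        ((X n ω : ℝ) / ((X0 : ℝ) + Y0 + 2 * m * n)) ^ k *
        (1 - (X n ω : ℝ) / ((X0 : ℝ) + Y0 + 2 * m * n)) ^ (m - k) * p k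
  step_blue : ∀ n, ∀ k ≤ m,
    μ[Set.indicator {ω | A (n + 1) ω = A n ω ∧ X (n + 1) ω = X n ω + k}
        (fun _ => (1 : ℝ)) | F n]
      =ᵐ[μ] fun ω => (m.choose k : ℝ) *
        ((X n ω : ℝ) / ((X0 : ℝ) + Y0 + 2 * m * n)) ^ k *
        (1 - (X n ω : ℝ) / ((X0 : ℝ) + Y0 + 2 * m * n)) ^ (m - k) * (1 - p k)

namespace PAProcess

variable {Ω : Type} [MeasurableSpace Ω] (P : PAProcess Ω)

/-- Total degree `S_n = S_0 + 2mn`. -/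
def S (n : ℕ) : ℕ := P.X0 + P.Y0 + 2 * P.m * n

/-- Normalized red degree `x_n = X_n / S_n`. -/
def x (n : ℕ) (ω : Ω) : ℝ := (P.X n ω : ℝ) / (P.S n : ℝ)

/-- Normalized red node count `a_n = A_n / (A_0 + B_0 + n)`. -/
def a (n : ℕ) (ω : Ω) : ℝ := (P.A n ω : ℝ) / ((P.A0 : ℝ) + P.B0 + n)

/-- The polynomial `P` of the process. -/
def poly : ℝ → ℝ := polyP P.m P.p

/-- The zero set `Z_P` of the process. -/
def Zp : Set ℝ := zeroSetP P.m P.p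

end PAProcess

lemma pa_no_cross_pos {x y γ : ℕ → ℝ} {G : ℝ → ℝ} {a b : ℝ} (hab : a < b)
    (hinc : ∀ n, y (n + 1) = y n + γ n * G (x n)) (hγ : ∀ n, 0 ≤ γ n)
    (hxy : Tendsto (fun n => y n - x n) atTop (nhds 0))
    (hst : Tendsto (fun n => γ n * G (x n)) atTop (nhds 0))
    (hG : ∀ z ∈ Set.Icc a b, 0 < G z)
    (h1 : ∃ᶠ n in atTop, y n < a) (h2 : ∃ᶠ n in atTop, b < y n) : False := by
  have hη : 0 < (b - a) / 4 := by linarith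
  have e1 := (Metric.tendsto_nhds.1 hxy) _ hη
  have e2 := (Metric.tendsto_nhds.1 hst) _ hη
  obtain ⟨N, hN⟩ := eventually_atTop.1 (e1.and e2)
  obtain ⟨n0, hn0, hb⟩ := frequently_atTop.1 h2 N
  have inv : ∀ n, n0 ≤ n → a + (b - a) / 4 ≤ y n := by
    intro n hn
    induction n, hn using Nat.le_induction with
    | base => linarith
    | succ n hn ih =>
      obtain ⟨c1, c2⟩ := hN n (hn0.trans hn)
      rw [Real.dist_eq, sub_zero, abs_lt] at c1 c2
      rw [hinc]
      by_cases hc : y n ≤ a + (b - a) / 2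
      · have : 0 < G (x n) := hG _ ⟨by linarith, by linarith⟩
        have := mul_nonneg (hγ n) this.le
        linarith
      · push Not at hc
        linarith
  obtain ⟨n1, hn1, ha⟩ := frequently_atTop.1 h1 n0
  have := inv n1 hn1
  linarith

lemma pa_no_cross_neg {x y γ : ℕ → ℝ} {G : ℝ → ℝ} {a b : ℝ} (hab : a < b)
    (hinc : ∀ n, y (n + 1) = y n + γ n * G (x n)) (hγ : ∀ n, 0 ≤ γ n)
    (hxy : Tendsto (fun n => y n - x n) atTop (nhds 0))
    (hst : Tendsto (fun n => γ n * G (x n)) atTop (nhds 0))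
    (hG : ∀ z ∈ Set.Icc a b, G z < 0)
    (h1 : ∃ᶠ n in atTop, y n < a) (h2 : ∃ᶠ n in atTop, b < y n) : False := by
  refine pa_no_cross_pos (x := fun n => - x n) (y := fun n => - y n) (γ := γ)
    (G := fun z => - G (-z)) (a := -b) (b := -a) (by linarith) ?_ hγ ?_ ?_ ?_ ?_ ?_
  · intro n
    simp only [hinc, neg_neg]; ring
  · have := hxy.neg
    simp only [neg_zero] at this
    refine this.congr fun n => by ring
  · have := hst.neg
    simp only [neg_zero] at this
    refine this.congr fun n => by simp
  · intro z hz
    have := hG (-z) ⟨by linarith [hz.2], by linarith [hz.1]⟩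
    linarith
  · exact h2.mono fun n h => by linarith
  · exact h1.mono fun n h => by linarith

lemma pa_sum_bdd {y γ : ℕ → ℝ} {δ C : ℝ} (hδ : 0 < δ) {x : ℕ → ℝ} {G : ℝ → ℝ}
    (hinc : ∀ n, y (n + 1) = y n + γ n * G (x n)) (hγ : ∀ n, 0 ≤ γ n)
    (hdiv : ¬ Summable γ) (hy : ∀ n, y n ≤ C)
    (hG : ∀ᶠ n in atTop, δ ≤ G (x n)) : False := by
  obtain ⟨N, hN⟩ := eventually_atTop.1 hG
  apply hdiv
  rw [← summable_nat_add_iff N]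
  refine summable_of_sum_range_le (c := (C - y N) / δ) (fun n => hγ _) fun n => ?_
  rw [le_div_iff₀ hδ]
  have : (∑ i ∈ Finset.range n, γ (i + N)) * δ ≤ y (n + N) - y N := by
    induction n with
    | zero => simp
    | succ n ih =>
      rw [Finset.sum_range_succ, add_mul]
      have e : n + 1 + N = (n + N) + 1 := by ring
      rw [e, hinc]
      have := mul_le_mul_of_nonneg_left (hN (n + N) (by omega)) (hγ (n + N))
      linarith
  linarith [hy (n + N)]

lemma pa_det {x γ ε : ℕ → ℝ} {G : ℝ → ℝ} {W : ℝ} (hGc : Continuous G)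
    (hfin : {z | G z = 0}.Finite)
    (hx : ∀ n, x n ∈ Set.Icc (0 : ℝ) 1)
    (hinc : ∀ n, x (n + 1) = x n + γ n * G (x n) + ε n) (hγ : ∀ n, 0 ≤ γ n)
    (hγ0 : Tendsto γ atTop (nhds 0)) (hdiv : ¬ Summable γ)
    (hW : Tendsto (fun n => ∑ k ∈ Finset.range n, ε k) atTop (nhds W)) :
    ∃ L, Tendsto x atTop (nhds L) ∧ L ∈ Set.Icc (0 : ℝ) 1 ∧ G L = 0 := by
  set y : ℕ → ℝ := fun n => x n + (W - ∑ k ∈ Finset.range n, ε k) with hy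
  have hyinc : ∀ n, y (n + 1) = y n + γ n * G (x n) := by
    intro n
    simp only [hy, Finset.sum_range_succ, hinc]; ring
  have hxy : Tendsto (fun n => y n - x n) atTop (nhds 0) := by
    have := hW.const_sub W
    rw [sub_self] at this
    exact this.congr fun n => by simp only [hy]; ring
  obtain ⟨K, hK⟩ := (isCompact_Icc (a := (0:ℝ)) (b := 1)).exists_bound_of_continuousOn hGc.continuousOn
  have hst : Tendsto (fun n => γ n * G (x n)) atTop (nhds 0) := by
    refine squeeze_zero_norm (a := fun n => γ n * K) (fun n => ?_) (by simpa using hγ0.mul_const K)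
    rw [norm_mul, Real.norm_of_nonneg (hγ n)]
    exact mul_le_mul_of_nonneg_left (hK _ (hx n)) (hγ n)
  obtain ⟨R, hR⟩ : ∃ R, ∀ n, |y n| ≤ R := by
    obtain ⟨R, hR⟩ := hxy.norm.bddAbove_range
    refine ⟨R + 1, fun n => ?_⟩
    have h1 := hR ⟨n, rfl⟩
    simp only [Real.norm_eq_abs] at h1
    have h2 := hx n
    rw [abs_le] at h1 ⊢
    constructor <;> linarith [h1.1, h1.2, h2.1, h2.2]
  have hconv : ∃ c, Tendsto y atTop (nhds c) := by
    refine tendsto_of_no_upcrossings dense_univ ?_ ?_ ?_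
    · rintro a - b - hab ⟨h1, h2⟩
      have hinf : (Set.Ioo a b \ {z | G z = 0}).Infinite := (Set.Ioo_infinite hab).sdiff hfin
      have : ∃ a' b', a ≤ a' ∧ a' < b' ∧ b' ≤ b ∧ ∀ z ∈ Set.Icc a' b', G z ≠ 0 := by
        obtain ⟨z, hz, hz0⟩ := hinf.nonempty
        have ho : IsOpen (Set.Ioo a b ∩ {z | G z ≠ 0}) :=
          isOpen_Ioo.inter (isOpen_ne_fun hGc continuous_const)
        obtain ⟨r, hr, hb⟩ := Metric.isOpen_iff.1 ho z ⟨hz, hz0⟩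
        have hsub : ∀ w ∈ Set.Icc (z - r/2) (z + r/2), w ∈ Set.Ioo a b ∩ {z | G z ≠ 0} := by
          intro w hw
          apply hb
          rw [Metric.mem_ball, Real.dist_eq, abs_lt]
          constructor <;> linarith [hw.1, hw.2]
        refine ⟨z - r/2, z + r/2, ?_, by linarith, ?_, fun w hw => (hsub w hw).2⟩
        · exact (hsub (z - r/2) ⟨by linarith, by linarith⟩).1.1.le
        · exact (hsub (z + r/2) ⟨by linarith, by linarith⟩).1.2.le
      obtain ⟨a', b', ha, hab', hb, hne⟩ := this
      have h1' : ∃ᶠ n in atTop, y n < a' := h1.mono fun n h => by linarith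
      have h2' : ∃ᶠ n in atTop, b' < y n := h2.mono fun n h => by linarith
      have hpc : IsPreconnected (Set.Icc a' b') := isPreconnected_Icc
      rcases lt_or_gt_of_ne (hne a' ⟨le_rfl, hab'.le⟩) with hs | hs
      · refine pa_no_cross_neg hab' hyinc hγ hxy hst (fun z hz => ?_) h1' h2'
        by_contra hc
        push Not at hc
        obtain ⟨w, hw, hw0⟩ := hpc.intermediate_value (⟨le_rfl, hab'.le⟩ : a' ∈ Set.Icc a' b') hz
          hGc.continuousOn (⟨hs.le, hc⟩ : (0:ℝ) ∈ Set.Icc _ _)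
        exact hne w hw hw0
      · refine pa_no_cross_pos hab' hyinc hγ hxy hst (fun z hz => ?_) h1' h2'
        by_contra hc
        push Not at hc
        obtain ⟨w, hw, hw0⟩ := hpc.intermediate_value hz (⟨le_rfl, hab'.le⟩ : a' ∈ Set.Icc a' b')
          hGc.continuousOn (⟨hc, hs.le⟩ : (0:ℝ) ∈ Set.Icc _ _)
        exact hne w hw hw0
    · exact isBoundedUnder_of ⟨R, fun n => (abs_le.1 (hR n)).2⟩
    · exact isBoundedUnder_of ⟨-R, fun n => (abs_le.1 (hR n)).1⟩
  obtain ⟨L, hL⟩ := hconv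
  have hxL : Tendsto x atTop (nhds L) := by
    have := hL.sub hxy
    rw [sub_zero] at this
    exact this.congr fun n => by ring
  refine ⟨L, hxL, isClosed_Icc.mem_of_tendsto hxL (Eventually.of_forall hx), ?_⟩
  have hGL : Tendsto (fun n => G (x n)) atTop (nhds (G L)) := (hGc.tendsto L).comp hxL
  by_contra hne
  rcases lt_or_gt_of_ne hne with hs | hs
  · refine pa_sum_bdd (y := fun n => - y n) (x := x) (γ := γ) (G := fun z => - G z)
      (δ := -(G L) / 2) (C := R) (by linarith) (fun n => ?_) hγ hdiv
      (fun n => by linarith [(abs_le.1 (hR n)).1]) ?_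
    · simp only [hyinc]; ring
    · filter_upwards [hGL.eventually (gt_mem_nhds (show G L < G L / 2 by linarith))] with n hn
      linarith
  · refine pa_sum_bdd (y := y) (x := x) (γ := γ) (G := G)
      (δ := (G L) / 2) (C := R) (by linarith) hyinc hγ hdiv
      (fun n => by linarith [(abs_le.1 (hR n)).2]) ?_
    filter_upwards [hGL.eventually (lt_mem_nhds (show G L / 2 < G L by linarith))] with n hn
    linarith

lemma pa_kronecker {A q : ℕ → ℝ} {c L W : ℝ} (hc : 0 ≤ c) (hq : Tendsto q atTop (nhds L))
    (hW : Tendsto (fun n => ∑ k ∈ Finset.range n, (1 / (c + k + 1)) * (A (k + 1) - A k - q k))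
      atTop (nhds W)) :
    Tendsto (fun n : ℕ => A n / (c + n)) atTop (nhds L) := by
  set w : ℕ → ℝ := fun n => ∑ k ∈ Finset.range n, (1 / (c + k + 1)) * (A (k + 1) - A k - q k) with hw
  have key : ∀ n : ℕ, A n = A 0 + ∑ k ∈ Finset.range n, (q k - w k) + (c + n) * w n := by
    intro n
    induction n with
    | zero => simp [hw]
    | succ n ih =>
      have h1 : w (n + 1) = w n + (1 / (c + n + 1)) * (A (n + 1) - A n - q n) := by
        simp only [hw, Finset.sum_range_succ]
      have hpos : c + n + 1 ≠ 0 := by positivity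
      have h2 : (c + n + 1) * w (n + 1) = (c + n + 1) * w n + (A (n + 1) - A n - q n) := by
        rw [h1]; field_simp
      rw [Finset.sum_range_succ]
      push_cast
      rw [← add_assoc c, h2]
      linarith
  have hcn : Tendsto (fun n : ℕ => c + (n : ℝ)) atTop atTop :=
    tendsto_atTop_add_const_left _ _ tendsto_natCast_atTop_atTop
  have h1 : Tendsto (fun n : ℕ => A 0 / (c + n)) atTop (nhds 0) := hcn.const_div_atTop _
  have h1' : Tendsto (fun n : ℕ => c / (c + n)) atTop (nhds 0) := hcn.const_div_atTop _
  have h2 := (hq.sub hW).cesaro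
  have h3 := ((h1'.const_sub 1).mul h2)
  have h4 := (h1.add h3).add hW
  have e : 0 + (1 - 0) * (L - W) + W = L := by ring
  rw [e] at h4
  refine h4.congr' ?_
  filter_upwards [eventually_gt_atTop 0] with n hn
  have hn' : (0:ℝ) < n := by exact_mod_cast hn
  have : c + n ≠ 0 := by positivity
  rw [key n]
  change A 0 / (c + n) + (1 - c / (c + n)) * ((n:ℝ)⁻¹ * ∑ i ∈ Finset.range n, (q i - w i)) + w n = _
  field_simp
  ring

lemma pa_zero_finite {m : ℕ} (hm : 1 ≤ m) {p : ℕ → ℝ} (h : ∃ k ≤ m, p k ≠ (k : ℝ) / m) :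
    {z | polyP m p z = 0}.Finite := by
  let Q : Polynomial ℝ := ∑ k ∈ Finset.range (m + 1),
    Polynomial.C ((m.choose k : ℝ) * (p k - (k : ℝ) / m)) * Polynomial.X ^ k
  have hQ : Q ≠ 0 := by
    obtain ⟨k, hk, hne⟩ := h
    intro h0
    have h1 : Q.coeff k = 0 := by rw [h0]; simp
    simp only [Q, Polynomial.finsetSum_coeff, Polynomial.coeff_C_mul_X_pow] at h1
    rw [Finset.sum_ite_eq, if_pos (Finset.mem_range.2 (by omega))] at h1
    rcases mul_eq_zero.1 h1 with h2 | h2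
    · exact (Nat.choose_pos hk).ne' (by exact_mod_cast h2)
    · exact hne (sub_eq_zero.1 h2)
  refine ((Polynomial.finite_setOfPred_isRoot hQ).image (fun t => t / (1 + t))|>.insert 1).subset ?_
  intro z hz
  by_cases hz1 : z = 1
  · exact Or.inl hz1
  right
  have h1z : 1 - z ≠ 0 := fun h => hz1 (by linarith)
  refine ⟨z / (1 - z), ?_, ?_⟩
  · change Q.eval (z / (1 - z)) = 0
    have hz' : polyP m p z = 0 := hz
    have : (1 - z) ^ m * Q.eval (z / (1 - z)) = 2 * polyP m p z := by
      simp only [Q, polyP, Polynomial.eval_finsetSum, Polynomial.eval_mul, Polynomial.eval_C,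
        Polynomial.eval_pow, Polynomial.eval_X]
      rw [← mul_assoc, Finset.mul_sum]
      norm_num
      refine Finset.sum_congr rfl fun k hk => ?_
      have hk' : k ≤ m := by have := Finset.mem_range.1 hk; omega
      have e : (1 - z) ^ m = (1 - z) ^ (m - k) * (1 - z) ^ k := by
        rw [← pow_add]; congr 1; omega
      rw [e, div_pow]
      field_simp
    rw [hz', mul_zero] at this
    exact (mul_eq_zero.1 this).resolve_left (pow_ne_zero _ h1z)
  · simp only
    field_simp
    ring

lemma pa_bern_sum (m : ℕ) (z : ℝ) :
    ∑ k ∈ Finset.range (m + 1), (m.choose k : ℝ) * z ^ k * (1 - z) ^ (m - k) = 1 := by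
  have := congrArg (Polynomial.eval z) (bernsteinPolynomial.sum ℝ m)
  simpa [Polynomial.eval_finsetSum, bernsteinPolynomial] using this

lemma pa_bern_mean (m : ℕ) (z : ℝ) :
    ∑ k ∈ Finset.range (m + 1), (m.choose k : ℝ) * z ^ k * (1 - z) ^ (m - k) * k = m * z := by
  have := congrArg (Polynomial.eval z) (bernsteinPolynomial.sum_smul ℝ m)
  simp [Polynomial.eval_finsetSum, bernsteinPolynomial] at this
  rw [← this]
  exact Finset.sum_congr rfl fun k _ => by ring

lemma pa_two_poly {m : ℕ} (hm : 1 ≤ m) (p : ℕ → ℝ) (z : ℝ) :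
    ∑ k ∈ Finset.range (m + 1), (m.choose k : ℝ) * z ^ k * (1 - z) ^ (m - k) * p k
      = z + 2 * polyP m p z := by
  have hm' : (m : ℝ) ≠ 0 := by positivity
  have h := pa_bern_mean m z
  have : z = ∑ k ∈ Finset.range (m + 1), (m.choose k : ℝ) * z ^ k * (1 - z) ^ (m - k) * (k / m) := by
    have : ∑ k ∈ Finset.range (m + 1), (m.choose k : ℝ) * z ^ k * (1 - z) ^ (m - k) * (k / m)
      = (∑ k ∈ Finset.range (m + 1), (m.choose k : ℝ) * z ^ k * (1 - z) ^ (m - k) * k) / m := by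
      rw [Finset.sum_div]
      exact Finset.sum_congr rfl fun k _ => by ring
    rw [this, h]; field_simp
  conv_rhs => enter [1]; rw [this]
  rw [polyP, ← mul_assoc]
  norm_num
  rw [← Finset.sum_add_distrib]
  exact Finset.sum_congr rfl fun k _ => by ring

lemma pa_noise {Ω : Type} [m0 : MeasurableSpace Ω] {μ : Measure Ω} [IsProbabilityMeasure μ]
    {F : Filtration ℕ m0} {D : ℕ → Ω → ℝ} {γ : ℕ → ℝ} {C : ℝ}
    (hD : ∀ n, StronglyMeasurable[F (n + 1)] (D n)) (hC : ∀ n ω, |D n ω| ≤ C)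
    (h0 : ∀ n, μ[D n | F n] =ᵐ[μ] 0) (hγ : Summable fun n => γ n ^ 2) :
    ∀ᵐ ω ∂μ, ∃ W, Tendsto (fun n => ∑ k ∈ Finset.range n, γ k * D k ω) atTop (nhds W) := by
  set M : ℕ → Ω → ℝ := fun n ω => ∑ k ∈ Finset.range n, γ k * D k ω with hM
  have hMs : ∀ n, M (n + 1) = M n + γ n • D n := by
    intro n; funext ω; simp [hM, Finset.sum_range_succ]
  have hadp : StronglyAdapted F M := by
    intro n
    induction n with
    | zero => 
      have : M 0 = fun _ => 0 := by funext ω; simp [hM]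
      rw [this]; exact stronglyMeasurable_const
    | succ n ih =>
      rw [hMs]
      exact (ih.mono (F.mono (Nat.le_succ n))).add ((hD n).const_smul (γ n))
  have hDb : ∀ n, MemLp (D n) ⊤ μ := fun n =>
    memLp_top_of_bound ((hD n).mono (F.le _)).aestronglyMeasurable C
      (Eventually.of_forall fun ω => hC n ω)
  have hMb : ∀ n, MemLp (M n) ⊤ μ := by
    intro n
    induction n with
    | zero => 
      have : M 0 = fun _ => 0 := by funext ω; simp [hM]
      rw [this]; exact memLp_const 0
    | succ n ih => rw [hMs]; exact ih.add ((hDb n).const_smul (γ n))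
  have hDi : ∀ n, Integrable (D n) μ := fun n => (hDb n).integrable le_top
  have hMi : ∀ n, Integrable (M n) μ := fun n => (hMb n).integrable le_top
  have hmart : Martingale M F μ := by
    refine martingale_of_condExp_sub_eq_zero_nat hadp hMi fun n => ?_
    have : M (n + 1) - M n = γ n • D n := by rw [hMs]; abel
    rw [this]
    refine (condExp_smul (γ n) (D n) (F n)).trans ?_
    filter_upwards [h0 n] with ω h
    simp [h]
  have hM2 : ∀ n, Integrable (fun ω => M n ω ^ 2) μ := fun n =>
    ((hMb n).mono_exponent le_top : MemLp (M n) 2 μ).integrable_sq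
  have hD2 : ∀ n, Integrable (fun ω => D n ω ^ 2) μ := fun n =>
    ((hDb n).mono_exponent le_top : MemLp (D n) 2 μ).integrable_sq
  have hMD : ∀ n, Integrable (M n * D n) μ := fun n =>
    ((hMb n).mono_exponent le_top : MemLp (M n) 2 μ).integrable_mul
      ((hDb n).mono_exponent le_top : MemLp (D n) 2 μ)
  have hMD0 : ∀ n, ∫ ω, M n ω * D n ω ∂μ = 0 := by
    intro n
    have h1 := condExp_mul_of_stronglyMeasurable_left (hadp n) (hMD n) (hDi n)
    have h2 := integral_condExp (μ := μ) (F.le n) (f := M n * D n)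
    have h3 : ∫ ω, (M n * D n) ω ∂μ = 0 := by
      rw [← h2, integral_congr_ae h1]
      have : (M n * μ[D n | F n]) =ᵐ[μ] 0 := by
        filter_upwards [h0 n] with ω h
        simp [h]
      rw [integral_congr_ae this]; simp
    exact h3
  have hbd : ∀ n, ∫ ω, M n ω ^ 2 ∂μ ≤ ∑ k ∈ Finset.range n, γ k ^ 2 * C ^ 2 := by
    intro n
    induction n with
    | zero => simp [hM]
    | succ n ih =>
      have e : ∀ ω, M (n + 1) ω ^ 2 = M n ω ^ 2 + (2 * γ n) * (M n ω * D n ω) + γ n ^ 2 * D n ω ^ 2 := by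
        intro ω; rw [hMs]; simp only [Pi.add_apply, Pi.smul_apply, smul_eq_mul]; ring
      have i2 : Integrable (fun ω => (2 * γ n) * (M n ω * D n ω)) μ := (hMD n).const_mul _
      have i12 : Integrable (fun ω => M n ω ^ 2 + (2 * γ n) * (M n ω * D n ω)) μ := (hM2 n).add i2
      have i3 : Integrable (fun ω => γ n ^ 2 * D n ω ^ 2) μ := (hD2 n).const_mul _
      simp_rw [e]
      rw [integral_add i12 i3, integral_add (hM2 n) i2, integral_const_mul, hMD0,
        integral_const_mul, Finset.sum_range_succ, mul_zero, add_zero]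
      have : ∫ ω, D n ω ^ 2 ∂μ ≤ C ^ 2 := by
        calc ∫ ω, D n ω ^ 2 ∂μ ≤ ∫ ω, C ^ 2 ∂μ := by
              refine integral_mono (hD2 n) (integrable_const _) fun ω => ?_
              exact sq_le_sq' (by linarith [(abs_le.1 (hC n ω)).1]) (abs_le.1 (hC n ω)).2
          _ = C ^ 2 := by simp
      have := mul_le_mul_of_nonneg_left this (sq_nonneg (γ n))
      linarith
  set T : ℝ := ∑' k, γ k ^ 2 * C ^ 2
  have hT : ∀ n, ∫ ω, M n ω ^ 2 ∂μ ≤ T := fun n =>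
    (hbd n).trans ((hγ.mul_right (C ^ 2)).sum_le_tsum _ (fun k _ => by positivity))
  have hL1 : ∀ n, eLpNorm (M n) 1 μ ≤ ((1 + T).toNNReal : ENNReal) := by
    intro n
    rw [eLpNorm_one_eq_lintegral_enorm, ← ofReal_integral_norm_eq_lintegral_enorm (hMi n)]
    refine ENNReal.ofReal_le_ofReal ?_
    calc ∫ ω, ‖M n ω‖ ∂μ ≤ ∫ ω, (1 + M n ω ^ 2) ∂μ := by
          refine integral_mono (hMi n).norm ((integrable_const _).add (hM2 n)) fun ω => ?_
          simp only [Real.norm_eq_abs]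
          nlinarith [sq_abs (M n ω), sq_nonneg (|M n ω| - 1), abs_nonneg (M n ω)]
      _ = 1 + ∫ ω, M n ω ^ 2 ∂μ := by rw [integral_add (integrable_const _) (hM2 n)]; simp
      _ ≤ 1 + T := by linarith [hT n]
  filter_upwards [hmart.submartingale.ae_tendsto_limitProcess hL1] with ω hω
  exact ⟨_, hω⟩

namespace PAProcess

variable {Ω : Type} [MeasurableSpace Ω] (P : PAProcess Ω)

/-- Red transition event. -/
def evR (n k : ℕ) : Set Ω :=
  {ω | P.A (n + 1) ω = P.A n ω + 1 ∧ P.X (n + 1) ω = P.X n ω + k + P.m}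

/-- Blue transition event. -/
def evB (n k : ℕ) : Set Ω :=
  {ω | P.A (n + 1) ω = P.A n ω ∧ P.X (n + 1) ω = P.X n ω + k}

/-- Bernstein weight. -/
def bw (n k : ℕ) (ω : Ω) : ℝ :=
  (P.m.choose k : ℝ) * P.x n ω ^ k * (1 - P.x n ω) ^ (P.m - k)

/-- Weighted observable of the transition. -/
def obs (c d : ℕ → ℝ) (n : ℕ) (ω : Ω) : ℝ :=
  ∑ k ∈ Finset.range (P.m + 1),
    (c k * (P.evR n k).indicator (fun _ => (1 : ℝ)) ω
      + d k * (P.evB n k).indicator (fun _ => (1 : ℝ)) ω)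

/-- Conditional mean of the observable. -/
def obsMean (c d : ℕ → ℝ) (n : ℕ) (ω : Ω) : ℝ :=
  ∑ k ∈ Finset.range (P.m + 1),
    (c k * (P.bw n k ω * P.p k) + d k * (P.bw n k ω * (1 - P.p k)))

lemma S_cast (n : ℕ) : (P.S n : ℝ) = (P.X0 : ℝ) + P.Y0 + 2 * P.m * n := by
  simp [S]

lemma x_mem (n : ℕ) (ω : Ω) : P.x n ω ∈ Set.Icc (0 : ℝ) 1 := by
  refine ⟨by unfold x; positivity, ?_⟩
  unfold x
  refine div_le_one_of_le₀ ?_ (by positivity)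
  exact_mod_cast P.hXle n ω

lemma adA {n k : ℕ} (h : n ≤ k) : Measurable[P.F k] (P.A n) := (P.adaptedA n).mono (P.F.mono h) le_rfl
lemma adX {n k : ℕ} (h : n ≤ k) : Measurable[P.F k] (P.X n) := (P.adaptedX n).mono (P.F.mono h) le_rfl

lemma meas_evR (n k : ℕ) : MeasurableSet[P.F (n + 1)] (P.evR n k) := by
  have h1 := P.adA (le_refl (n + 1))
  have h2 := P.adA (Nat.le_succ n)
  have h3 := P.adX (le_refl (n + 1))
  have h4 := P.adX (Nat.le_succ n)
  exact (measurableSet_eq_fun h1 (h2.add_const 1)).inter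
    (measurableSet_eq_fun h3 ((h4.add_const k).add_const P.m))

lemma meas_evB (n k : ℕ) : MeasurableSet[P.F (n + 1)] (P.evB n k) := by
  have h1 := P.adA (le_refl (n + 1))
  have h2 := P.adA (Nat.le_succ n)
  have h3 := P.adX (le_refl (n + 1))
  have h4 := P.adX (Nat.le_succ n)
  exact (measurableSet_eq_fun h1 h2).inter
    (measurableSet_eq_fun h3 (h4.add_const k))

lemma sm_x (n : ℕ) : StronglyMeasurable[P.F n] (P.x n) := by
  have h : Measurable[P.F n] (P.x n) :=
    ((measurable_of_countable (fun k : ℕ => (k : ℝ) / (P.S n : ℝ))).comp (P.adaptedX n))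
  exact h.stronglyMeasurable

lemma sm_obs (c d : ℕ → ℝ) (n : ℕ) : StronglyMeasurable[P.F (n + 1)] (P.obs c d n) := by
  unfold obs
  refine Finset.stronglyMeasurable_fun_sum _ fun k _ => ?_
  exact ((stronglyMeasurable_const.indicator (P.meas_evR n k)).const_mul _).add
    ((stronglyMeasurable_const.indicator (P.meas_evB n k)).const_mul _)

lemma sm_obsMean (c d : ℕ → ℝ) (n : ℕ) : StronglyMeasurable[P.F n] (P.obsMean c d n) := by
  unfold obsMean bw
  refine Finset.stronglyMeasurable_fun_sum _ fun k _ => ?_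
  have h := P.sm_x n
  have h2 : StronglyMeasurable[P.F n] (fun ω =>
      (P.m.choose k : ℝ) * P.x n ω ^ k * (1 - P.x n ω) ^ (P.m - k)) :=
    ((h.pow k).const_mul _).mul ((stronglyMeasurable_const.sub h).pow _)
  exact ((h2.mul_const _).const_mul _).add ((h2.mul_const _).const_mul _)

lemma bw_nonneg (n k : ℕ) (ω : Ω) : 0 ≤ P.bw n k ω := by
  have := P.x_mem n ω
  have h1 := this.1
  have h2 : 0 ≤ 1 - P.x n ω := by linarith [this.2]
  unfold bw; positivity

lemma bw_sum (n : ℕ) (ω : Ω) : ∑ k ∈ Finset.range (P.m + 1), P.bw n k ω = 1 :=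
  pa_bern_sum _ _

lemma bw_le (n k : ℕ) (hk : k ∈ Finset.range (P.m + 1)) (ω : Ω) : P.bw n k ω ≤ 1 := by
  rw [← P.bw_sum n ω]
  exact Finset.single_le_sum (f := fun k => P.bw n k ω) (fun i _ => P.bw_nonneg n i ω) hk

lemma abs_obs_le (c d : ℕ → ℝ) (n : ℕ) (ω : Ω) :
    |P.obs c d n ω| ≤ ∑ k ∈ Finset.range (P.m + 1), (|c k| + |d k|) := by
  refine (Finset.abs_sum_le_sum_abs _ _).trans (Finset.sum_le_sum fun k _ => ?_)
  have hi : ∀ s : Set Ω, |s.indicator (fun _ => (1 : ℝ)) ω| ≤ 1 := by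
    intro s; by_cases h : ω ∈ s <;> simp [h]
  refine (abs_add_le _ _).trans (add_le_add ?_ ?_) <;> rw [abs_mul] <;>
    exact mul_le_of_le_one_right (abs_nonneg _) (hi _)

lemma abs_obsMean_le (c d : ℕ → ℝ) (n : ℕ) (ω : Ω) :
    |P.obsMean c d n ω| ≤ ∑ k ∈ Finset.range (P.m + 1), (|c k| + |d k|) := by
  refine (Finset.abs_sum_le_sum_abs _ _).trans (Finset.sum_le_sum fun k hk => ?_)
  have hb0 := P.bw_nonneg n k ω
  have hb1 := P.bw_le n k hk ω
  have hp := P.hp k (by have := Finset.mem_range.1 hk; omega)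
  have hp' : 1 - P.p k ∈ Set.Icc (0:ℝ) 1 := ⟨by linarith [hp.2], by linarith [hp.1]⟩
  have hi : ∀ q ∈ Set.Icc (0:ℝ) 1, |P.bw n k ω * q| ≤ 1 := by
    intro q hq
    rw [abs_of_nonneg (mul_nonneg hb0 hq.1)]
    exact mul_le_one₀ hb1 hq.1 hq.2
  refine (abs_add_le _ _).trans (add_le_add ?_ ?_) <;> rw [abs_mul]
  · exact mul_le_of_le_one_right (abs_nonneg _) (hi _ hp)
  · exact mul_le_of_le_one_right (abs_nonneg _) (hi _ hp')

lemma int_R (n k : ℕ) : Integrable ((P.evR n k).indicator (fun _ => (1 : ℝ))) P.μ := by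
  have := P.isProb
  exact (integrable_const _).indicator (P.F.le _ _ (P.meas_evR n k))

lemma int_B (n k : ℕ) : Integrable ((P.evB n k).indicator (fun _ => (1 : ℝ))) P.μ := by
  have := P.isProb
  exact (integrable_const _).indicator (P.F.le _ _ (P.meas_evB n k))

lemma condExp_obs (c d : ℕ → ℝ) (n : ℕ) :
    P.μ[P.obs c d n | P.F n] =ᵐ[P.μ] P.obsMean c d n := by
  have := P.isProb
  have e : P.obs c d n = ∑ k ∈ Finset.range (P.m + 1),
      (c k • (P.evR n k).indicator (fun _ => (1 : ℝ)) + d k • (P.evB n k).indicator (fun _ => (1 : ℝ))) := by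
    funext ω
    simp [obs, Finset.sum_apply]
  rw [e]
  refine (condExp_finsetSum (fun k _ => ((P.int_R n k).smul _).add ((P.int_B n k).smul _)) _).trans ?_
  have h : ∀ k ∈ Finset.range (P.m + 1), 
      P.μ[(c k • (P.evR n k).indicator (fun _ => (1 : ℝ)) + d k • (P.evB n k).indicator (fun _ => (1 : ℝ))) | P.F n]
      =ᵐ[P.μ] fun ω => c k * (P.bw n k ω * P.p k) + d k * (P.bw n k ω * (1 - P.p k)) := by
    intro k hk
    have hk' : k ≤ P.m := by have := Finset.mem_range.1 hk; omega
    refine (condExp_add ((P.int_R n k).smul _) ((P.int_B n k).smul _) _).trans ?_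
    filter_upwards [condExp_smul (μ := P.μ) (c k) ((P.evR n k).indicator (fun _ => (1 : ℝ))) (P.F n),
      condExp_smul (μ := P.μ) (d k) ((P.evB n k).indicator (fun _ => (1 : ℝ))) (P.F n),
      P.step_red n k hk', P.step_blue n k hk'] with ω h1 h2 h3 h4
    rw [Pi.add_apply, h1, h2, Pi.smul_apply, Pi.smul_apply]
    unfold evR evB
    rw [h3, h4]
    simp only [smul_eq_mul, bw, x, S_cast]
  have h' : ∀ᵐ ω ∂P.μ, ∀ k ∈ Finset.range (P.m + 1), 
      (P.μ[(c k • (P.evR n k).indicator (fun _ => (1 : ℝ)) + d k • (P.evB n k).indicator (fun _ => (1 : ℝ))) | P.F n]) ω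
      = c k * (P.bw n k ω * P.p k) + d k * (P.bw n k ω * (1 - P.p k)) :=
    (ae_ball_iff (Finset.range (P.m + 1)).countable_toSet).2 h
  filter_upwards [h'] with ω hω
  rw [Finset.sum_apply, obsMean]
  exact Finset.sum_congr rfl hω

lemma noise (c d : ℕ → ℝ) {γ : ℕ → ℝ} (hγ : Summable fun n => γ n ^ 2) :
    ∀ᵐ ω ∂P.μ, ∃ W, Tendsto (fun n => ∑ k ∈ Finset.range n,
      γ k * (P.obs c d k ω - P.obsMean c d k ω)) atTop (nhds W) := by
  have := P.isProb
  set C := ∑ k ∈ Finset.range (P.m + 1), (|c k| + |d k|)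
  refine pa_noise (F := P.F) (D := fun n ω => P.obs c d n ω - P.obsMean c d n ω) (C := C + C)
    (fun n => (P.sm_obs c d n).sub ((P.sm_obsMean c d n).mono (P.F.mono (Nat.le_succ n)))) 
    (fun n ω => (abs_sub _ _).trans (add_le_add (P.abs_obs_le c d n ω) (P.abs_obsMean_le c d n ω)))
    (fun n => ?_) hγ
  have i1 : Integrable (P.obs c d n) P.μ :=
    Integrable.of_bound ((P.sm_obs c d n).mono (P.F.le _)).aestronglyMeasurable C
      (Eventually.of_forall fun ω => P.abs_obs_le c d n ω)
  have i2 : Integrable (P.obsMean c d n) P.μ :=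
    Integrable.of_bound ((P.sm_obsMean c d n).mono (P.F.le _)).aestronglyMeasurable C
      (Eventually.of_forall fun ω => P.abs_obsMean_le c d n ω)
  refine (condExp_sub i1 i2 _).trans ?_
  rw [condExp_of_stronglyMeasurable (P.F.le n) (P.sm_obsMean c d n) i2]
  filter_upwards [P.condExp_obs c d n] with ω h
  simp [h]

/-- almost surely, exactly one of the transitions occurs -/
lemma ae_step (n : ℕ) : ∀ᵐ ω ∂P.μ, ∃ k ≤ P.m, ω ∈ P.evR n k ∨ ω ∈ P.evB n k := by
  have := P.isProb
  set c : ℕ → ℝ := fun _ => 1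
  have hm : P.obsMean c c n = fun _ => 1 := by
    funext ω
    rw [← P.bw_sum n ω, obsMean]
    exact Finset.sum_congr rfl fun k _ => by simp only [c]; ring
  have h1 : ∫ ω, P.obs c c n ω ∂P.μ = 1 := by
    rw [← integral_condExp (P.F.le n), integral_congr_ae (P.condExp_obs c c n), hm]
    simp
  have i1 : Integrable (P.obs c c n) P.μ :=
    Integrable.of_bound ((P.sm_obs c c n).mono (P.F.le _)).aestronglyMeasurable _
      (Eventually.of_forall fun ω => P.abs_obs_le c c n ω)
  have hle : ∀ ω, P.obs c c n ω ≤ 1 := by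
    intro ω
    by_cases hex : ∃ k ∈ Finset.range (P.m + 1), ω ∈ P.evR n k ∨ ω ∈ P.evB n k
    · obtain ⟨k, hk, hkk⟩ := hex
      unfold obs
      rw [Finset.sum_eq_single_of_mem k hk]
      · have hnot : ¬ (ω ∈ P.evR n k ∧ ω ∈ P.evB n k) := by
          rintro ⟨⟨h1, h2⟩, ⟨h3, h4⟩⟩; omega
        by_cases h1 : ω ∈ P.evR n k <;> by_cases h2 : ω ∈ P.evB n k <;> simp [c, h1, h2]
        exact (hnot ⟨h1, h2⟩).elim
      · intro j _ hj
        have h1 : ω ∉ P.evR n j := by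
          rintro ⟨h1, h2⟩
          rcases hkk with ⟨h3, h4⟩ | ⟨h3, h4⟩ <;> omega
        have h2 : ω ∉ P.evB n j := by
          rintro ⟨h1, h2⟩
          rcases hkk with ⟨h3, h4⟩ | ⟨h3, h4⟩ <;> omega
        simp [h1, h2]
    · push Not at hex
      unfold obs
      rw [Finset.sum_eq_zero]
      · norm_num
      · intro k hk
        simp [(hex k hk).1, (hex k hk).2]
  have hae : (fun ω => 1 - P.obs c c n ω) =ᵐ[P.μ] 0 := by
    rw [← integral_eq_zero_iff_of_nonneg (fun ω => sub_nonneg.2 (hle ω)) ((integrable_const _).sub i1)]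
    rw [integral_sub (integrable_const _) i1, h1]; simp
  filter_upwards [hae] with ω hω
  by_contra hex
  push Not at hex
  have : P.obs c c n ω = 0 := by
    unfold obs
    refine Finset.sum_eq_zero fun k hk => ?_
    have hk' : k ≤ P.m := by have := Finset.mem_range.1 hk; omega
    simp [(hex k hk').1, (hex k hk').2]
  simp [this] at hω

lemma obs_of_R (c d : ℕ → ℝ) {n k : ℕ} (hk : k ≤ P.m) {ω : Ω} (h : ω ∈ P.evR n k) :
    P.obs c d n ω = c k := by
  unfold obs
  have hb : ∀ j, ω ∉ P.evB n j := by
    rintro j ⟨h1, h2⟩; have := h.1; omega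
  rw [Finset.sum_eq_single_of_mem k (Finset.mem_range.2 (by omega))]
  · simp [h, hb]
  · intro j _ hj
    have h1 : ω ∉ P.evR n j := by
      rintro ⟨h1, h2⟩; have := h.2; omega
    simp [h1, hb]

lemma obs_of_B (c d : ℕ → ℝ) {n k : ℕ} (hk : k ≤ P.m) {ω : Ω} (h : ω ∈ P.evB n k) :
    P.obs c d n ω = d k := by
  unfold obs
  have hb : ∀ j, ω ∉ P.evR n j := by
    rintro j ⟨h1, h2⟩; have := h.1; omega
  rw [Finset.sum_eq_single_of_mem k (Finset.mem_range.2 (by omega))]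
  · simp [h, hb]
  · intro j _ hj
    have h1 : ω ∉ P.evB n j := by
      rintro ⟨h1, h2⟩; have := h.2; omega
    simp [h1, hb]

lemma ae_obs : ∀ᵐ ω ∂P.μ, ∀ n,
    (P.X (n + 1) ω : ℝ) = P.X n ω + P.obs (fun k => k + P.m) (fun k => k) n ω ∧
    (P.A (n + 1) ω : ℝ) = P.A n ω + P.obs (fun _ => 1) (fun _ => 0) n ω := by
  rw [ae_all_iff]
  intro n
  filter_upwards [P.ae_step n] with ω hω
  obtain ⟨k, hk, h | h⟩ := hω
  · rw [P.obs_of_R _ _ hk h, P.obs_of_R _ _ hk h, h.1, h.2]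
    push_cast; constructor <;> ring
  · rw [P.obs_of_B _ _ hk h, P.obs_of_B _ _ hk h, h.1, h.2]
    push_cast; constructor <;> ring

lemma mean_A (n : ℕ) (ω : Ω) :
    P.obsMean (fun _ => 1) (fun _ => 0) n ω = P.x n ω + 2 * polyP P.m P.p (P.x n ω) := by
  rw [← pa_two_poly P.hm, obsMean]
  exact Finset.sum_congr rfl fun k _ => by simp only [bw]; ring

lemma mean_X (n : ℕ) (ω : Ω) :
    P.obsMean (fun k => k + P.m) (fun k => k) n ω
      = 2 * P.m * P.x n ω + 2 * P.m * polyP P.m P.p (P.x n ω) := by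
  have h1 := pa_two_poly P.hm P.p (P.x n ω)
  have h2 := pa_bern_mean P.m (P.x n ω)
  have : P.obsMean (fun k => k + P.m) (fun k => k) n ω
    = P.m * (∑ k ∈ Finset.range (P.m + 1), (P.m.choose k : ℝ) * P.x n ω ^ k * (1 - P.x n ω) ^ (P.m - k) * P.p k)
      + ∑ k ∈ Finset.range (P.m + 1), (P.m.choose k : ℝ) * P.x n ω ^ k * (1 - P.x n ω) ^ (P.m - k) * k := by
    rw [Finset.mul_sum, ← Finset.sum_add_distrib, obsMean]
    exact Finset.sum_congr rfl fun k _ => by simp only [bw]; ring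
  rw [this, h1, h2]; ring

end PAProcess

lemma pa_summ {f : ℕ → ℝ} (hf : ∀ n : ℕ, (n : ℝ) + 1 ≤ f n) : Summable fun n => (1 / f n) ^ 2 := by
  have h := (summable_nat_add_iff 1).2 (Real.summable_one_div_nat_pow.2 (le_refl 2))
  refine Summable.of_nonneg_of_le (fun n => sq_nonneg _) (fun n => ?_) h
  have h1 : (0:ℝ) < n + 1 := by positivity
  have h2 := hf n
  rw [div_pow, one_pow]
  push_cast
  gcongr

/-- **Nonlinear models.** In a nonlinear model (`p_k ≠ k/m` for some `0 ≤ k ≤ m`) with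
`X_0 > 0` and `Y_0 > 0`, the zero set `Z_P` is a finite set, the process `{a_n}` converges
almost surely, and its limit lies in `Z_P` almost surely. -/
theorem nonlinear_model_convergence_to_zero_set
    {Ω : Type} [MeasurableSpace Ω] (P : PAProcess Ω)
    (hnonlin : ∃ k ≤ P.m, P.p k ≠ (k : ℝ) / P.m)
    (hX0 : 0 < P.X0) (hY0 : 0 < P.Y0) :
    P.Zp.Finite ∧
    ∃ L : Ω → ℝ,
      (∀ᵐ ω ∂P.μ, Tendsto (fun n => P.a n ω) atTop (nhds (L ω))) ∧
      (∀ᵐ ω ∂P.μ, L ω ∈ P.Zp) := by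
  have hm := P.hm
  have hm1 : (1:ℝ) ≤ P.m := by exact_mod_cast hm
  have hx1 : (1:ℝ) ≤ P.X0 := by exact_mod_cast hX0
  have hy1 : (0:ℝ) ≤ P.Y0 := by positivity
  have hfin := pa_zero_finite hm hnonlin
  refine ⟨hfin.subset fun z hz => hz.2, ?_⟩
  have hScast := P.S_cast
  have hSpos : ∀ n, (0:ℝ) < P.S n := by
    intro n; rw [hScast]; positivity
  have hSn : ∀ n : ℕ, (n : ℝ) + 1 ≤ P.S (n + 1) := by
    intro n; rw [hScast]; push_cast
    have : (0:ℝ) ≤ n := by positivity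
    nlinarith
  have hGc : Continuous (polyP P.m P.p) := by unfold polyP; fun_prop
  have hcpos : (0:ℝ) ≤ (P.A0 : ℝ) + P.B0 := by positivity
  have hdivS : ¬ Summable fun n => 2 * P.m / (P.S (n + 1) : ℝ) := by
    intro hs
    set K : ℝ := P.X0 + P.Y0 + 2 * P.m
    have hK : 0 < K := by positivity
    have h2 : Summable fun n : ℕ => 1 / ((n : ℝ) + 1) := by
      refine Summable.of_nonneg_of_le (fun n => by positivity) (fun n => ?_) (hs.mul_left (K / (2 * P.m)))
      have e : K / (2 * P.m) * (2 * P.m / (P.S (n + 1) : ℝ)) = K / P.S (n + 1) := by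
        field_simp
      rw [e, div_le_div_iff₀ (by positivity) (hSpos _), hScast]
      have : (0:ℝ) ≤ n := by positivity
      push_cast
      simp only [K]
      nlinarith [mul_nonneg this hy1, mul_nonneg this (by linarith : (0:ℝ) ≤ P.X0)]
    apply Real.not_summable_one_div_natCast
    rw [← summable_nat_add_iff 1]
    simpa using h2
  have hγ0 : Tendsto (fun n => 2 * P.m / (P.S (n + 1) : ℝ)) atTop (nhds 0) := by
    refine Tendsto.const_div_atTop ?_ _
    refine tendsto_atTop_mono hSn ?_
    exact tendsto_atTop_add_const_right _ _ tendsto_natCast_atTop_atTop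
  have hboth : ∀ᵐ ω ∂P.μ, ∃ L, Tendsto (fun n => P.a n ω) atTop (nhds L) ∧ L ∈ P.Zp := by
    filter_upwards [P.ae_obs, P.noise (fun k => k + P.m) (fun k => k) (pa_summ hSn),
      P.noise (fun _ => 1) (fun _ => 0)
        (pa_summ (f := fun n : ℕ => (P.A0 : ℝ) + P.B0 + n + 1) (fun n => by linarith))]
      with ω hω hW1 hW2
    obtain ⟨W1, hW1⟩ := hW1
    obtain ⟨W2, hW2⟩ := hW2
    have hstep : ∀ n, P.x (n + 1) ω = P.x n ω + 2 * P.m / (P.S (n + 1) : ℝ) * polyP P.m P.p (P.x n ω)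
        + 1 / (P.S (n + 1) : ℝ) * (P.obs (fun k => k + P.m) (fun k => k) n ω
          - P.obsMean (fun k => k + P.m) (fun k => k) n ω) := by
      intro n
      have h1 := (hω n).1
      rw [P.mean_X]
      have hs := hSpos n
      have hs' := hSpos (n + 1)
      have hx : P.x n ω * P.S n = P.X n ω := by
        unfold PAProcess.x; field_simp
      have hss : (P.S (n + 1) : ℝ) = P.S n + 2 * P.m := by
        rw [hScast, hScast]; push_cast; ring
      have hx' : P.x (n + 1) ω = P.X (n + 1) ω / P.S (n + 1) := rfl
      rw [hx', h1, ← hx]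
      have hq : (P.x n ω) = P.x n ω * (P.S n + 2 * P.m) / P.S (n + 1) := by
        rw [← hss]; field_simp
      generalize P.obs (fun k => (k:ℝ) + P.m) (fun k => (k:ℝ)) n ω = o
      generalize polyP P.m P.p (P.x n ω) = g
      generalize P.x n ω = xx at *
      field_simp
      rw [hss]; ring
    obtain ⟨L, hL, hLm, hL0⟩ := pa_det (x := fun n => P.x n ω) hGc hfin (fun n => P.x_mem n ω)
      (γ := fun n => 2 * P.m / (P.S (n + 1) : ℝ)) hstep
      (fun n => by positivity) hγ0 hdivS hW1
    refine ⟨L, ?_, hLm, hL0⟩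
    have hq : Tendsto (fun n => P.x n ω + 2 * polyP P.m P.p (P.x n ω)) atTop (nhds L) := by
      have := hL.add (((hGc.tendsto L).comp hL).const_mul 2)
      rw [hL0, mul_zero, add_zero] at this
      exact this
    refine pa_kronecker (A := fun n => (P.A n ω : ℝ)) hcpos hq (W := W2) ?_
    refine hW2.congr fun n => Finset.sum_congr rfl fun k _ => ?_
    rw [P.mean_A, (hω k).2]
    ring
  refine ⟨fun ω => limUnder atTop (fun n => P.a n ω), ?_, ?_⟩
  · filter_upwards [hboth] with ω ⟨L, hL, _⟩
    rw [hL.limUnder_eq]; exact hL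
  · filter_upwards [hboth] with ω ⟨L, hL, hZ⟩
    rw [hL.limUnder_eq]; exact hZ
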